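/- arXiv:2410.17887 — 3 statements merged into one kernel-verified Lean document; each statement's English description precedes it below -/
import Mathlib

section
/- For every η > 0 there is a unique δ_η ∈ (0,1) solving −((1+δ)/2)·log((1+δ)/2) − ((1−δ)/2)·log((1−δ)/2) = (η/(1+η))·log 2. Define ttau(η,κ) := max{ (1+η)·τ₁(κ), (1+δ_η²)/(2(1−δ_η²)²) + [δ_η(1+6δ_η+3δ_η²+2δ_η³)/((1−δ_η²)³(1−δ_η))]·κ + [2(1+δ_η)⁵/(1−δ_η²)⁴ − (1+3δ_η²)/(4(1−δ_η²)³)]·κ² + κ⁴(1+3δ_η²)/(32(1−δ_η²)³) } and τ₂(κ) := inf_{u ∈ (0,κ]} inf_{η>0} ttau(η,u). Then κ ↦ τ₂(κ) is a continuous and non-increasing function on (0,2]. -/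
/-!
`(1 + δ)/2` ranges over `(1/2, 1)`, where binary entropy decreases strictly and continuously from
`log 2` to `0`; this gives existence and uniqueness of `δ_η`.

`τ₂` is non-increasing because the infimum runs over a growing set of values, bounded below by `0`
since `τ₁ ≥ 0` on `(0, 2]`. Upper semicontinuity holds because for fixed `η` the function
`ttau(η, ·)` is continuous. Lower semicontinuity can fail only from the right, at some `κ < 2`, where
`τ₁(κ) > 0`. There, for `κ ≤ u ≤ κ' ≤ 2`, the second branch of `ttau` is non-decreasing in `κ` and
`τ₁` is non-increasing, so `τ₁(κ') · ttau(η, κ) ≤ τ₁(κ) · ttau(η, u)`. Hence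
`τ₁(κ') · τ₂(κ) ≤ τ₁(κ) · τ₂(κ')` (`tau2_mul_le`), a bound uniform in `η`, and letting `κ' ↓ κ` gives
the claim.
-/

open Filter Topology

noncomputable section

/-- The first-moment threshold `τ₁(κ)`. -/
def tau1 (κ : ℝ) : ℝ :=
  (1 / Real.log 2) * (-κ ^ 4 / 128 + κ ^ 2 / 8 - (1 / 2) * Real.log (κ / 2) - 3 / 8)

/-- The equation defining `δ_η`:
`-((1+δ)/2)·log((1+δ)/2) - ((1-δ)/2)·log((1-δ)/2) = (η/(1+η))·log 2`. -/
def deltaEq (η δ : ℝ) : Prop :=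
  -((1 + δ) / 2) * Real.log ((1 + δ) / 2) - ((1 - δ) / 2) * Real.log ((1 - δ) / 2)
    = (η / (1 + η)) * Real.log 2

/-- The second branch of `ttau`, as a function of `κ` and `δ = δ_η`. -/
def gFun (κ δ : ℝ) : ℝ :=
  (1 + δ ^ 2) / (2 * (1 - δ ^ 2) ^ 2)
    + (δ * (1 + 6 * δ + 3 * δ ^ 2 + 2 * δ ^ 3) / ((1 - δ ^ 2) ^ 3 * (1 - δ))) * κ
    + (2 * (1 + δ) ^ 5 / (1 - δ ^ 2) ^ 4 - (1 + 3 * δ ^ 2) / (4 * (1 - δ ^ 2) ^ 3)) * κ ^ 2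
    + κ ^ 4 * (1 + 3 * δ ^ 2) / (32 * (1 - δ ^ 2) ^ 3)

/-- `ttau(η, κ)`, given a choice function `deltaEta : η ↦ δ_η`. -/
def ttau (deltaEta : ℝ → ℝ) (η κ : ℝ) : ℝ :=
  max ((1 + η) * tau1 κ) (gFun κ (deltaEta η))

/-- `τ₂(κ) = inf_{u ∈ (0,κ]} inf_{η > 0} ttau(η, u)`. -/
def tau2 (deltaEta : ℝ → ℝ) (κ : ℝ) : ℝ :=
  sInf {t : ℝ | ∃ u ∈ Set.Ioc (0 : ℝ) κ, ∃ η > (0 : ℝ), t = ttau deltaEta η u}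

/-- `bartau(κ) = inf_{η > 0} ttau(η, κ)`. -/
def bartau (deltaEta : ℝ → ℝ) (κ : ℝ) : ℝ :=
  sInf {t : ℝ | ∃ η > (0 : ℝ), t = ttau deltaEta η κ}

end

lemma deltaEq_iff (η δ : ℝ) :
    deltaEq η δ ↔ Real.binEntropy ((1 + δ) / 2) = η / (1 + η) * Real.log 2 := by
  have h : 1 - (1 + δ) / 2 = (1 - δ) / 2 := by ring
  rw [deltaEq, Real.binEntropy_eq_negMulLog_add_negMulLog_one_sub, Real.negMulLog,
    Real.negMulLog, h]
  constructor <;> intro h' <;> linarith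

lemma existsUnique_delta {η : ℝ} (hη : 0 < η) :
    ∃! δ, δ ∈ Set.Ioo (0 : ℝ) 1 ∧ deltaEq η δ := by
  have hlog : 0 < Real.log 2 := Real.log_pos one_lt_two
  have hlt : η / (1 + η) < 1 := by rw [div_lt_one (by positivity)]; linarith
  have hmem : η / (1 + η) * Real.log 2 ∈
      Set.Ioo (Real.binEntropy 1) (Real.binEntropy 2⁻¹) := by
    rw [Real.binEntropy_one, Real.binEntropy_two_inv]
    exact ⟨by positivity, by nlinarith⟩
  obtain ⟨p, hp, hpe⟩ := intermediate_value_Ioo' (by norm_num : (2⁻¹ : ℝ) ≤ 1)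
    Real.binEntropy_continuous.continuousOn hmem
  have hp1 := hp.1
  have hp2 := hp.2
  refine ⟨2 * p - 1, ⟨⟨by linarith, by linarith⟩, ?_⟩, ?_⟩
  · rw [deltaEq_iff, ← hpe]
    congr 1
    ring
  · rintro δ ⟨⟨h0, h1⟩, hδ⟩
    rw [deltaEq_iff, ← hpe] at hδ
    have := Real.binEntropy_strictAntiOn.injOn (x₁ := (1 + δ) / 2) (x₂ := p)
      ⟨by linarith, by linarith⟩ ⟨hp1.le, hp2.le⟩ hδ
    linarith

lemma hasDerivAt_tau1 {κ : ℝ} (hκ : κ ≠ 0) :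
    HasDerivAt tau1 (-((κ ^ 2 - 4) ^ 2 / (32 * κ * Real.log 2))) κ := by
  have hlog : Real.log 2 ≠ 0 := (Real.log_pos one_lt_two).ne'
  have h1 : HasDerivAt (fun x : ℝ => -x ^ 4 / 128) (-(4 * κ ^ 3) / 128) κ := by
    simpa using ((hasDerivAt_pow 4 κ).neg.div_const 128)
  have h2 : HasDerivAt (fun x : ℝ => x ^ 2 / 8) (2 * κ / 8) κ := by
    simpa using ((hasDerivAt_pow 2 κ).div_const 8)
  have h3 : HasDerivAt (fun x : ℝ => Real.log (x / 2)) ((1 / 2) / (κ / 2)) κ :=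
    ((hasDerivAt_id κ).div_const 2).log (div_ne_zero hκ two_ne_zero)
  have h := (((h1.add h2).sub (h3.const_mul (1 / 2))).sub_const (3 / 8)).const_mul
    (1 / Real.log 2)
  refine h.congr_deriv ?_
  field_simp
  ring

lemma tau1_strictAntiOn : StrictAntiOn tau1 (Set.Ioc 0 2) := by
  refine strictAntiOn_of_deriv_neg (convex_Ioc 0 2)
    (fun x hx => (hasDerivAt_tau1 hx.1.ne').continuousAt.continuousWithinAt) ?_
  intro x hx
  rw [interior_Ioc] at hx
  obtain ⟨h0, h2⟩ := hx
  rw [(hasDerivAt_tau1 h0.ne').deriv, neg_lt_zero]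
  have hlog : 0 < Real.log 2 := Real.log_pos one_lt_two
  have hne : x ^ 2 - 4 ≠ 0 := by nlinarith
  positivity

lemma tau1_two : tau1 2 = 0 := by
  norm_num [tau1]

lemma tau1_nonneg {κ : ℝ} (hκ : κ ∈ Set.Ioc (0 : ℝ) 2) : 0 ≤ tau1 κ :=
  tau1_two ▸ tau1_strictAntiOn.antitoneOn hκ ⟨two_pos, le_rfl⟩ hκ.2

/-- For fixed `δ`, `gFun` is a polynomial in `κ` with nonnegative coefficients. -/
lemma gFun_mono {δ κ u : ℝ} (hδ : δ ∈ Set.Ioo (0 : ℝ) 1) (hκ : 0 ≤ κ) (hu : κ ≤ u) :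
    gFun κ δ ≤ gFun u δ := by
  obtain ⟨h0, h1⟩ := hδ
  have hD : 0 < 1 - δ ^ 2 := by nlinarith
  have h1' : 0 < 1 - δ := by linarith
  have hc : 0 ≤ 2 * (1 + δ) ^ 5 / (1 - δ ^ 2) ^ 4
      - (1 + 3 * δ ^ 2) / (4 * (1 - δ ^ 2) ^ 3) := by
    have e : 2 * (1 + δ) ^ 5 / (1 - δ ^ 2) ^ 4 - (1 + 3 * δ ^ 2) / (4 * (1 - δ ^ 2) ^ 3)
        = (8 * (1 + δ) ^ 5 - (1 + 3 * δ ^ 2) * (1 - δ ^ 2)) / (4 * (1 - δ ^ 2) ^ 4) := by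
      field_simp
      ring
    rw [e]
    have h5 : 1 ≤ (1 + δ) ^ 5 := one_le_pow₀ (by linarith)
    have : (1 + 3 * δ ^ 2) * (1 - δ ^ 2) ≤ 4 := by nlinarith [sq_nonneg δ]
    exact div_nonneg (by linarith) (by positivity)
  unfold gFun
  gcongr

lemma continuousAt_ttau (d : ℝ → ℝ) (η : ℝ) {κ : ℝ} (hκ : 0 < κ) :
    ContinuousAt (ttau d η) κ := by
  have h1 : ContinuousAt tau1 κ := (hasDerivAt_tau1 hκ.ne').continuousAt
  have h2 : ContinuousAt (fun x => gFun x (d η)) κ := by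
    unfold gFun
    fun_prop
  exact (continuousAt_const.mul h1).max h2

lemma ttau_nonneg (d : ℝ → ℝ) {η κ : ℝ} (hη : 0 < η) (hκ : κ ∈ Set.Ioc (0 : ℝ) 2) :
    0 ≤ ttau d η κ :=
  le_max_of_le_left (mul_nonneg (by linarith) (tau1_nonneg hκ))

lemma tau2_le (d : ℝ → ℝ) {κ u η : ℝ} (hκ : κ ≤ 2) (hu : u ∈ Set.Ioc 0 κ) (hη : 0 < η) :
    tau2 d κ ≤ ttau d η u := by
  refine csInf_le ⟨0, ?_⟩ ⟨u, hu, η, hη, rfl⟩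
  rintro _ ⟨v, hv, ξ, hξ, rfl⟩
  exact ttau_nonneg d hξ ⟨hv.1, hv.2.trans hκ⟩

lemma le_tau2 (d : ℝ → ℝ) {κ b : ℝ} (hκ : 0 < κ)
    (h : ∀ u ∈ Set.Ioc 0 κ, ∀ η > 0, b ≤ ttau d η u) : b ≤ tau2 d κ := by
  refine le_csInf ⟨_, κ, ⟨hκ, le_rfl⟩, 1, one_pos, rfl⟩ ?_
  rintro _ ⟨u, hu, η, hη, rfl⟩
  exact h u hu η hη

lemma tau2_antitoneOn (d : ℝ → ℝ) : AntitoneOn (tau2 d) (Set.Ioc 0 2) :=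
  fun _ hκ _ hκ' hle => le_tau2 d hκ.1 fun _ hu _ hη =>
    tau2_le d hκ'.2 ⟨hu.1, hu.2.trans hle⟩ hη

/-- From `κ < 2` to `κ' ≥ κ`, `τ₂` decreases at most in the proportion
`τ₁(κ') / τ₁(κ)`; this gives its right lower semicontinuity. -/
lemma tau2_mul_le (d : ℝ → ℝ) (hd : ∀ η > (0 : ℝ), d η ∈ Set.Ioo (0 : ℝ) 1) {κ κ' : ℝ}
    (hκ : κ ∈ Set.Ioo (0 : ℝ) 2) (hκ' : κ' ∈ Set.Ioc (0 : ℝ) 2) (hle : κ ≤ κ') :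
    tau2 d κ * tau1 κ' / tau1 κ ≤ tau2 d κ' := by
  have hκ2 : κ ∈ Set.Ioc (0 : ℝ) 2 := ⟨hκ.1, hκ.2.le⟩
  have hpos : 0 < tau1 κ :=
    tau1_two ▸ tau1_strictAntiOn hκ2 ⟨two_pos, le_rfl⟩ hκ.2
  have ht' : 0 ≤ tau1 κ' := tau1_nonneg hκ'
  have htle : tau1 κ' ≤ tau1 κ := tau1_strictAntiOn.antitoneOn hκ2 hκ' hle
  refine le_tau2 d hκ'.1 fun u hu η hη => ?_
  have hu2 : u ∈ Set.Ioc (0 : ℝ) 2 := ⟨hu.1, hu.2.trans hκ'.2⟩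
  have hT : 0 ≤ ttau d η u := ttau_nonneg d hη hu2
  rw [div_le_iff₀ hpos]
  rcases le_total u κ with huκ | huκ
  · calc tau2 d κ * tau1 κ' ≤ ttau d η u * tau1 κ' :=
          mul_le_mul_of_nonneg_right (tau2_le d hκ2.2 ⟨hu.1, huκ⟩ hη) ht'
      _ ≤ ttau d η u * tau1 κ := mul_le_mul_of_nonneg_left htle hT
  · calc tau2 d κ * tau1 κ' ≤ ttau d η κ * tau1 κ' :=
          mul_le_mul_of_nonneg_right (tau2_le d hκ2.2 ⟨hκ.1, le_rfl⟩ hη) ht'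
      _ = max ((1 + η) * tau1 κ * tau1 κ') (gFun κ (d η) * tau1 κ') :=
          max_mul_of_nonneg _ _ ht'
      _ ≤ ttau d η u * tau1 κ := by
          refine max_le ?_ ?_
          · have h1 : tau1 κ' ≤ tau1 u := tau1_strictAntiOn.antitoneOn hu2 hκ' hu.2
            calc (1 + η) * tau1 κ * tau1 κ' ≤ (1 + η) * tau1 κ * tau1 u := by gcongr
              _ = (1 + η) * tau1 u * tau1 κ := by ring
              _ ≤ _ := mul_le_mul_of_nonneg_right (le_max_left _ _) hpos.le
          · have h2 : gFun κ (d η) ≤ ttau d η u :=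
              (gFun_mono (hd η hη) hκ.1.le huκ).trans (le_max_right _ _)
            exact (mul_le_mul_of_nonneg_right h2 ht').trans
              (mul_le_mul_of_nonneg_left htle hT)

lemma tau2_continuousOn (d : ℝ → ℝ) (hd : ∀ η > (0 : ℝ), d η ∈ Set.Ioo (0 : ℝ) 1) :
    ContinuousOn (tau2 d) (Set.Ioc 0 2) := by
  intro κ hκ
  refine tendsto_order.2 ⟨fun a ha => ?_, fun a ha => ?_⟩
  · rcases hκ.2.eq_or_lt with rfl | hlt
    · filter_upwards [self_mem_nhdsWithin] with x hx
      exact ha.trans_le (tau2_antitoneOn d hx hκ hx.2)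
    · have hpos : 0 < tau1 κ :=
        tau1_two ▸ tau1_strictAntiOn hκ ⟨two_pos, le_rfl⟩ hlt
      have hc : ContinuousAt (fun x => tau2 d κ * tau1 x / tau1 κ) κ :=
        (continuousAt_const.mul (hasDerivAt_tau1 hκ.1.ne').continuousAt).div_const _
      have hev : ∀ᶠ x in 𝓝 κ, a < tau2 d κ * tau1 x / tau1 κ :=
        hc.eventually (lt_mem_nhds (by simpa [hpos.ne'] using ha))
      filter_upwards [self_mem_nhdsWithin, nhdsWithin_le_nhds hev] with x hx hax
      rcases le_total x κ with h | h
      · exact ha.trans_le (tau2_antitoneOn d hx hκ h)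
      · exact hax.trans_le (tau2_mul_le d hd ⟨hκ.1, hlt⟩ hx h)
  · obtain ⟨_, ⟨u, hu, η, hη, rfl⟩, hlt⟩ :=
      exists_lt_of_csInf_lt
        (s := {t : ℝ | ∃ u ∈ Set.Ioc (0 : ℝ) κ, ∃ η > (0 : ℝ), t = ttau d η u})
        ⟨_, κ, ⟨hκ.1, le_rfl⟩, 1, one_pos, rfl⟩ ha
    -- Truncating a near-minimizer `u ≤ κ` at `x` keeps it admissible for `τ₂(x)`.
    have hc : ContinuousAt (fun x => ttau d η (min u x)) κ :=
      ContinuousAt.comp (g := ttau d η) (f := fun x => min u x)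
        (continuousAt_ttau d η (lt_min hu.1 hκ.1)) (by fun_prop)
    have hev : ∀ᶠ x in 𝓝 κ, ttau d η (min u x) < a :=
      hc.eventually (gt_mem_nhds (by simpa [min_eq_left hu.2] using hlt))
    filter_upwards [self_mem_nhdsWithin, nhdsWithin_le_nhds hev] with x hx hxa
    exact (tau2_le d hx.2 ⟨lt_min hu.1 hx.1, min_le_right _ _⟩ hη).trans_lt hxa

theorem stmt4 :
    (∀ η > (0 : ℝ), ∃! δ, δ ∈ Set.Ioo (0 : ℝ) 1 ∧ deltaEq η δ) ∧
    ∀ deltaEta : ℝ → ℝ,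
      (∀ η > (0 : ℝ), deltaEta η ∈ Set.Ioo (0 : ℝ) 1 ∧ deltaEq η (deltaEta η)) →
      ContinuousOn (tau2 deltaEta) (Set.Ioc 0 2) ∧
        AntitoneOn (tau2 deltaEta) (Set.Ioc 0 2) := by
  exact ⟨fun η hη => existsUnique_delta hη, fun d hd =>
    ⟨tau2_continuousOn d fun η hη => (hd η hη).1, tau2_antitoneOn d⟩⟩
end

section
/- Let κ ∈ (0,2] and let ρ_κ(x) := (4+κ²−2x²)/(4π√(κ²−x²)) for x ∈ (−κ,κ). Then for every z ∈ ℂ with Im(z) > 0, ∫_{−κ}^{κ} ρ_κ(y)/(z−y) dy = z/2 + (4+κ²−2z²)/(4·√(z²−κ²)), where √ denotes the branch of the complex square root with nonnegative imaginary part. -/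
/-!
Splitting `4 + κ² - 2y² = (4 + κ² - 2z²) + 2 (z - y) (z + y)` reduces the claim to the Stieltjes
transform of the arcsine law. Write `s = √(z² - κ²)` and `q = (z - s) / κ`, so that
`z = (κ/2) (q + q⁻¹)` and `s = (κ/2) (q⁻¹ - q)`; the choice of branch forces `‖q‖ < 1`
(`norm_joukowski_lt_one`). The substitution `y = κ cos θ` removes the inverse square root
(`integral_arcsine_subst`) and turns `s / (z - y)` into the Poisson kernel
`1/(1 - q e^{iθ}) + 1/(1 - q e^{-iθ}) - 1`. Since `‖q‖ < 1`, the points `1 - q e^{±iθ}` lie in the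
right half-plane, so the kernel has the primitive
`θ + i (log (1 - q e^{iθ}) - log (1 - q e^{-iθ}))` (`hasDerivAt_poissonPrimitive`), whose logarithms
cancel both at `0` and at `π`; its integral over `[0, π]` is therefore `π`.
-/

open MeasureTheory

/-- The branch of the complex square root with nonnegative imaginary part. -/
noncomputable def sqrtUpper (w : ℂ) : ℂ :=
  if 0 ≤ (w ^ (1 / 2 : ℂ)).im then w ^ (1 / 2 : ℂ) else -(w ^ (1 / 2 : ℂ))

lemma sqrtUpper_sq (w : ℂ) : sqrtUpper w ^ 2 = w := by
  have h : (w ^ (1 / 2 : ℂ)) ^ 2 = w := by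
    simp
  unfold sqrtUpper
  split_ifs
  · exact h
  · rw [neg_sq, h]

lemma sqrtUpper_im_nonneg (w : ℂ) : 0 ≤ (sqrtUpper w).im := by
  unfold sqrtUpper
  split_ifs with h
  · exact h
  · rw [Complex.neg_im]; linarith

/-- Of two reciprocal numbers `q`, `p` whose sum has positive imaginary part, the one whose
reciprocal lies in the upper half-plane is in the unit disc: `Im q = -‖q‖² Im p`. -/
lemma norm_joukowski_lt_one {p q : ℂ} (hpq : q * p = 1) (hp : 0 < p.im)
    (hsum : 0 < (q + p).im) : ‖q‖ < 1 := by
  have hq : q.im = -(q.re ^ 2 + q.im ^ 2) * p.im := by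
    have h1 := congrArg Complex.re hpq
    have h2 := congrArg Complex.im hpq
    simp only [Complex.mul_re, Complex.mul_im, Complex.one_re, Complex.one_im] at h1 h2
    linear_combination (-q.im) * h1 + q.re * h2
  have h3 : ‖q‖ ^ 2 = q.re ^ 2 + q.im ^ 2 := by
    rw [Complex.sq_norm, Complex.normSq_apply]; ring
  rw [Complex.add_im, hq, ← h3] at hsum
  have h4 : 0 < (1 - ‖q‖ ^ 2) * p.im := by linarith
  have h5 := pos_of_mul_pos_left h4 hp.le
  nlinarith [norm_nonneg q]

lemma one_sub_mul_mem_slitPlane {q e : ℂ} (hq : ‖q‖ < 1) (he : ‖e‖ = 1) :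
    1 - q * e ∈ Complex.slitPlane := by
  left
  have h : (q * e).re ≤ ‖q * e‖ := Complex.re_le_norm _
  rw [norm_mul, he, mul_one] at h
  rw [Complex.sub_re, Complex.one_re]
  linarith

/-- A primitive of the Poisson kernel with complex parameter `q`. -/
noncomputable def poissonPrimitive (q : ℂ) (θ : ℝ) : ℂ :=
  θ + Complex.I * (Complex.log (1 - q * Complex.exp (θ * Complex.I))
    - Complex.log (1 - q * Complex.exp (-(θ * Complex.I))))

lemma poissonPrimitive_zero (q : ℂ) : poissonPrimitive q 0 = 0 := by
  simp [poissonPrimitive]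

lemma poissonPrimitive_pi (q : ℂ) : poissonPrimitive q Real.pi = Real.pi := by
  simp [poissonPrimitive, Complex.exp_neg, Complex.exp_pi_mul_I]

lemma hasDerivAt_poissonPrimitive {q : ℂ} (hq : ‖q‖ < 1) (θ : ℝ) :
    HasDerivAt (poissonPrimitive q)
      (1 / (1 - q * Complex.exp (θ * Complex.I))
        + 1 / (1 - q * Complex.exp (-(θ * Complex.I))) - 1) θ := by
  have n1 : ‖Complex.exp (θ * Complex.I)‖ = 1 := Complex.norm_exp_ofReal_mul_I θ
  have n2 : ‖Complex.exp (-(θ * Complex.I))‖ = 1 := by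
    rw [Complex.exp_neg, norm_inv, n1, inv_one]
  have s1 := one_sub_mul_mem_slitPlane hq n1
  have s2 := one_sub_mul_mem_slitPlane hq n2
  have d0 : HasDerivAt (fun t : ℝ => (t : ℂ)) 1 θ := Complex.ofRealCLM.hasDerivAt
  have d1 := (((d0.mul_const Complex.I).cexp.const_mul q).const_sub 1).clog_real s1
  have d2 := (((d0.mul_const Complex.I).neg.cexp.const_mul q).const_sub 1).clog_real s2
  refine (d0.add ((d1.sub d2).const_mul Complex.I)).congr_deriv ?_
  have e1 := Complex.slitPlane_ne_zero s1
  have e2 := Complex.slitPlane_ne_zero s2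
  generalize Complex.exp (θ * Complex.I) = a at *
  generalize Complex.exp (-(θ * Complex.I)) = b at *
  field_simp
  rw [Complex.I_sq]
  ring

/-- The substitution `y = κ cos θ` against the arcsine weight. -/
lemma integral_arcsine_subst {κ : ℝ} (hκ : 0 < κ) (f : ℝ → ℂ) :
    ∫ y in Set.Ioo (-κ) κ, ((1 / Real.sqrt (κ ^ 2 - y ^ 2) : ℝ) : ℂ) * f y
      = ∫ θ in (0 : ℝ)..Real.pi, f (κ * Real.cos θ) := by
  have himg : (fun θ => κ * Real.cos θ) '' Set.Ioo 0 Real.pi = Set.Ioo (-κ) κ := by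
    ext y
    constructor
    · rintro ⟨θ, ⟨h0, h1⟩, rfl⟩
      have a : Real.cos θ < 1 := by
        simpa using Real.cos_lt_cos_of_nonneg_of_le_pi le_rfl h1.le h0
      have b : -1 < Real.cos θ := by
        simpa using Real.cos_lt_cos_of_nonneg_of_le_pi h0.le le_rfl h1
      constructor <;> dsimp only <;> nlinarith
    · rintro ⟨h0, h1⟩
      have a : y / κ < 1 := (div_lt_one hκ).2 h1
      have b : -1 < y / κ := by rw [lt_div_iff₀ hκ]; linarith
      refine ⟨Real.arccos (y / κ), ⟨Real.arccos_pos.2 a, ?_⟩, ?_⟩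
      · refine lt_of_le_of_ne (Real.arccos_le_pi _) fun h => ?_
        rw [Real.arccos_eq_pi] at h
        linarith
      · dsimp only
        rw [Real.cos_arccos b.le a.le]
        field_simp
  have hinj : Set.InjOn (fun θ => κ * Real.cos θ) (Set.Ioo 0 Real.pi) := by
    intro a ha b hb hab
    exact Real.injOn_cos (Set.Ioo_subset_Icc_self ha) (Set.Ioo_subset_Icc_self hb)
      (mul_left_cancel₀ hκ.ne' hab)
  rw [← himg, integral_image_eq_integral_abs_deriv_smul measurableSet_Ioo
    (fun θ _ => ((Real.hasDerivAt_cos θ).const_mul κ).hasDerivWithinAt) hinj,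
    intervalIntegral.integral_of_le Real.pi_pos.le, integral_Ioc_eq_integral_Ioo]
  refine setIntegral_congr_fun measurableSet_Ioo fun θ hθ => ?_
  have hs : 0 < κ * Real.sin θ := mul_pos hκ (Real.sin_pos_of_mem_Ioo hθ)
  have h1 : κ ^ 2 - (κ * Real.cos θ) ^ 2 = (κ * Real.sin θ) ^ 2 := by
    linear_combination (-κ ^ 2) * Real.sin_sq_add_cos_sq θ
  have h2 : |κ * -Real.sin θ| = κ * Real.sin θ := by
    rw [mul_neg, abs_neg, abs_of_pos hs]
  rw [h1, h2, Real.sqrt_sq hs.le, Complex.real_smul, ← mul_assoc, ← Complex.ofReal_mul,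
    mul_one_div_cancel hs.ne', Complex.ofReal_one, one_mul]

theorem stmt17 (κ : ℝ) (hκ : κ ∈ Set.Ioc (0 : ℝ) 2) (z : ℂ) (hz : 0 < z.im) :
    (∫ y in Set.Ioo (-κ) κ,
        (((4 + κ ^ 2 - 2 * y ^ 2) / (4 * Real.pi * Real.sqrt (κ ^ 2 - y ^ 2)) : ℝ) : ℂ) /
          (z - (y : ℂ)))
      = z / 2 + (4 + (κ : ℂ) ^ 2 - 2 * z ^ 2) / (4 * sqrtUpper (z ^ 2 - (κ : ℂ) ^ 2)) := by
  have hκ0 : 0 < κ := hκ.1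
  have hκc : (κ : ℂ) ≠ 0 := Complex.ofReal_ne_zero.2 hκ0.ne'
  have hπ : (Real.pi : ℂ) ≠ 0 := Complex.ofReal_ne_zero.2 Real.pi_ne_zero
  have hs2 := sqrtUpper_sq (z ^ 2 - (κ : ℂ) ^ 2)
  have hsim := sqrtUpper_im_nonneg (z ^ 2 - (κ : ℂ) ^ 2)
  set s := sqrtUpper (z ^ 2 - (κ : ℂ) ^ 2) with hs
  obtain ⟨q, hq⟩ : ∃ q, q = (z - s) / κ := ⟨_, rfl⟩
  obtain ⟨p, hp⟩ : ∃ p, p = (z + s) / κ := ⟨_, rfl⟩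
  have hqp : q * p = 1 := by
    rw [hq, hp]
    field_simp
    linear_combination -hs2
  have hzq : 2 * z = κ * (q + p) := by rw [hq, hp]; field_simp; ring
  have hsq : 2 * s = κ * (p - q) := by rw [hq, hp]; field_simp; ring
  have hpim : 0 < p.im := by
    rw [hp, Complex.div_ofReal_im, Complex.add_im]
    exact div_pos (by linarith) hκ0
  have hqpim : 0 < (q + p).im := by
    have : q + p = (2 * z) / κ := by rw [hzq]; field_simp
    rw [this, Complex.div_ofReal_im]
    refine div_pos ?_ hκ0
    simpa using hz
  have hqn : ‖q‖ < 1 := norm_joukowski_lt_one hqp hpim hqpim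
  have hzy (y : ℝ) : z - (y : ℂ) ≠ 0 := fun h => by
    have := congrArg Complex.im h
    simp at this
    linarith
  have hs0 : s ≠ 0 := by
    intro h
    have : p = q := by
      have h' := hsq
      rw [h, mul_zero] at h'
      exact sub_eq_zero.1 ((mul_eq_zero.1 h'.symm).resolve_left hκc)
    have h1 : ‖q‖ * ‖q‖ = 1 := by rw [← norm_mul, ← norm_one (α := ℂ), ← hqp, this]
    nlinarith [norm_nonneg q]
  let f : ℝ → ℂ := fun y => (4 + (κ : ℂ) ^ 2 - 2 * (y : ℂ) ^ 2) / (4 * Real.pi * (z - y))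
  have hint : ∀ y : ℝ,
      (((4 + κ ^ 2 - 2 * y ^ 2) / (4 * Real.pi * Real.sqrt (κ ^ 2 - y ^ 2)) : ℝ) : ℂ) /
          (z - (y : ℂ)) = ((1 / Real.sqrt (κ ^ 2 - y ^ 2) : ℝ) : ℂ) * f y := by
    intro y
    simp only [f]
    push_cast
    rw [div_div, div_mul_div_comm]
    congr 1 <;> ring
  simp only [hint]
  rw [integral_arcsine_subst hκ0 f]
  have hderiv : ∀ θ ∈ Set.uIcc 0 Real.pi, HasDerivAt
      (fun θ : ℝ => (2 * (z * θ + κ * ((Real.sin θ : ℝ) : ℂ))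
        + (4 + (κ : ℂ) ^ 2 - 2 * z ^ 2) / s * poissonPrimitive q θ) / (4 * Real.pi))
      (f (κ * Real.cos θ)) θ := by
    intro θ _
    have d0 : HasDerivAt (fun t : ℝ => (t : ℂ)) 1 θ := Complex.ofRealCLM.hasDerivAt
    have d1 := (Real.hasDerivAt_sin θ).ofReal_comp
    refine (((((d0.const_mul z).add (d1.const_mul (κ : ℂ))).const_mul 2).add
      ((hasDerivAt_poissonPrimitive hqn θ).const_mul _)).div_const _).congr_deriv ?_
    have n1 : ‖Complex.exp (θ * Complex.I)‖ = 1 := Complex.norm_exp_ofReal_mul_I θ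
    have n2 : ‖Complex.exp (-(θ * Complex.I))‖ = 1 := by
      rw [Complex.exp_neg, norm_inv, n1, inv_one]
    have e1 := Complex.slitPlane_ne_zero (one_sub_mul_mem_slitPlane hqn n1)
    have e2 := Complex.slitPlane_ne_zero (one_sub_mul_mem_slitPlane hqn n2)
    have hcos : 2 * ((Real.cos θ : ℝ) : ℂ)
        = Complex.exp (θ * Complex.I) + Complex.exp (-(θ * Complex.I)) := by
      rw [Complex.ofReal_cos, Complex.two_cos, neg_mul]
    have hee : Complex.exp (θ * Complex.I) * Complex.exp (-(θ * Complex.I)) = 1 := by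
      rw [← Complex.exp_add, add_neg_cancel, Complex.exp_zero]
    have hzc := hzy (κ * Real.cos θ)
    generalize Complex.exp (θ * Complex.I) = a at *
    generalize Complex.exp (-(θ * Complex.I)) = b at *
    have hker : 1 / (1 - q * a) + 1 / (1 - q * b) - 1
        = s / (z - ((κ * Real.cos θ : ℝ) : ℂ)) := by
      rw [eq_div_iff hzc]
      push_cast
      have hz' : z - κ * ((Real.cos θ : ℝ) : ℂ) = κ / 2 * (q + p - a - b) := by
        linear_combination hzq / 2 - κ / 2 * hcos
      have hs' : s = κ / 2 * (p - q) := by linear_combination hsq / 2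
      -- `(1 - q a) (1 - q b) = q (q + p - a - b)`, and the numerator of the kernel is `1 - q²`.
      have hprod : (1 - q * a) * (1 - q * b) = q * (q + p - a - b) := by
        linear_combination q ^ 2 * hee - hqp
      have hnum : 1 / (1 - q * a) + 1 / (1 - q * b) - 1
          = (1 - q ^ 2) / ((1 - q * a) * (1 - q * b)) := by
        field_simp
        linear_combination -q ^ 2 * hee
      have hne := mul_ne_zero e1 e2
      rw [← Complex.ofReal_cos, hz', hs', hnum, div_mul_eq_mul_div, div_eq_iff hne, hprod]
      linear_combination (-κ / 2 * (q + p - a - b)) * hqp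
    rw [hker]
    simp only [f]
    push_cast at hzc ⊢
    field_simp
    ring
  have hcont : Continuous fun θ : ℝ => f (κ * Real.cos θ) := by
    refine Continuous.div (by fun_prop) (by fun_prop) fun θ => ?_
    exact mul_ne_zero (mul_ne_zero (by norm_num) hπ) (hzy _)
  rw [intervalIntegral.integral_eq_sub_of_hasDerivAt hderiv (hcont.intervalIntegrable _ _)]
  simp only [poissonPrimitive_zero, poissonPrimitive_pi, Real.sin_pi, Real.sin_zero,
    Complex.ofReal_zero]
  field_simp
  ring
end

section
/- For every integer d ≥ 1 and every δ > 0, the integral of ∏_{i=1}^{d−1} √(u_{i+1} − u_i) over the region {u ∈ ℝ^d : −δ ≤ u_1 < u_2 < ⋯ < u_d ≤ δ} (with respect to Lebesgue measure du_1⋯du_d) is at least (δ/d)^{(3d−1)/2}. -/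
/-!
Put `h = δ / d` and cut `[-δ, δ]` into `d` intervals of length `2h`. Letting each `u_i` range over
the middle half (length `h`) of the `i`-th interval gives a cube of volume `h ^ d` inside the
ordered region, on which every gap `u_{i+1} - u_i` is at least `h`. The integrand is
nonnegative everywhere and at least `√h ^ (d - 1)` on the cube, so the integral is at least
`√h ^ (d - 1) * h ^ d = h ^ ((3d - 1) / 2)`.
-/

open MeasureTheory

/-- For every `d = m + 1 ≥ 1` and `δ > 0`, the integral of `∏_{i=1}^{d-1} √(u_{i+1} - u_i)`
over the ordered region `{-δ ≤ u_1 < u_2 < ⋯ < u_d ≤ δ}` is at least `(δ/d)^{(3d-1)/2}`. -/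
theorem stmt19 (m : ℕ) (δ : ℝ) (hδ : 0 < δ) :
    (δ / (m + 1 : ℝ)) ^ ((3 * (m + 1 : ℝ) - 1) / 2) ≤
      ∫ u in {u : Fin (m + 1) → ℝ | -δ ≤ u 0 ∧ StrictMono u ∧ u (Fin.last m) ≤ δ},
        ∏ i : Fin m, Real.sqrt (u i.succ - u i.castSucc) := by
  have hm : (0 : ℝ) < m + 1 := by positivity
  obtain ⟨h, hh⟩ : ∃ h : ℝ, h = δ / (m + 1 : ℝ) := ⟨_, rfl⟩
  have h0 : 0 < h := hh ▸ div_pos hδ hm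
  have hd : δ = h * (m + 1) := by rw [hh]; field_simp
  rw [← hh]
  set S : Set (Fin (m + 1) → ℝ) := {u | -δ ≤ u 0 ∧ StrictMono u ∧ u (Fin.last m) ≤ δ} with hS
  -- The corners of the cube: `-δ + (2i + 1)h` is the midpoint of the `i`-th interval.
  set a : Fin (m + 1) → ℝ := fun i => -δ + (2 * (i : ℕ) + 1) * h - h / 2 with ha
  set b : Fin (m + 1) → ℝ := fun i => -δ + (2 * (i : ℕ) + 1) * h + h / 2 with hb
  set f : (Fin (m + 1) → ℝ) → ℝ := fun u => ∏ i : Fin m, Real.sqrt (u i.succ - u i.castSucc)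
    with hf
  have hfc : Continuous f := by fun_prop
  have hgap : ∀ u ∈ Set.Icc a b, ∀ i : Fin m, h ≤ u i.succ - u i.castSucc := by
    intro u hu i
    have h1 := hu.1 i.succ
    have h2 := hu.2 i.castSucc
    simp only [ha, hb, Fin.val_succ, Fin.val_castSucc, Nat.cast_add, Nat.cast_one] at h1 h2
    linarith
  have hsub : Set.Icc a b ⊆ S := by
    intro u hu
    refine ⟨?_, Fin.strictMono_iff_lt_succ.2 fun i => ?_, ?_⟩
    · have h1 := hu.1 0
      simp only [ha, Fin.val_zero, Nat.cast_zero] at h1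
      linarith
    · linarith [hgap u hu i]
    · have h2 := hu.2 (Fin.last m)
      simp only [hb, Fin.val_last] at h2
      linarith
  have hSbdd : S ⊆ Set.Icc (fun _ => -δ) (fun _ => δ) := by
    rintro u ⟨h1, h2, h3⟩
    exact ⟨fun i => h1.trans (h2.monotone (Fin.zero_le i)),
      fun i => (h2.monotone (Fin.le_last i)).trans h3⟩
  have hintS : IntegrableOn f S := (hfc.continuousOn.integrableOn_compact isCompact_Icc).mono_set hSbdd
  have hvol : volume.real (Set.Icc a b) = h ^ (m + 1) := by
    have hab : ∀ i, b i - a i = h := fun i => by simp only [ha, hb]; ring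
    rw [Measure.real, Real.volume_Icc_pi_toReal (fun i => by linarith [hab i])]
    simp [hab]
  have hpow : h ^ ((3 * (m + 1 : ℝ) - 1) / 2) = √h ^ m * h ^ (m + 1) := by
    rw [Real.sqrt_eq_rpow, ← Real.rpow_natCast (h ^ (1 / 2 : ℝ)), ← Real.rpow_mul h0.le,
      ← Real.rpow_natCast h, ← Real.rpow_add h0]
    congr 1
    push_cast
    ring
  calc h ^ ((3 * (m + 1 : ℝ) - 1) / 2) = ∫ _ in Set.Icc a b, √h ^ m := by
        rw [hpow, setIntegral_const, hvol, smul_eq_mul, mul_comm]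
    _ ≤ ∫ u in Set.Icc a b, f u := by
        refine setIntegral_mono_on (continuousOn_const.integrableOn_compact isCompact_Icc)
          (hintS.mono_set hsub) measurableSet_Icc fun u hu => ?_
        calc √h ^ m = ∏ _i : Fin m, √h := by simp
          _ ≤ f u := Finset.prod_le_prod (fun _ _ => Real.sqrt_nonneg _)
            fun i _ => Real.sqrt_le_sqrt (hgap u hu i)
    _ ≤ ∫ u in S, f u :=
        setIntegral_mono_set hintS
          (Filter.Eventually.of_forall fun u => Finset.prod_nonneg fun _ _ => Real.sqrt_nonneg _)
          hsub.eventuallyLE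
end
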